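/- Fix s ∈ ℝ with 0 < s < 1 and y, ℏ ∈ ℂ with e^{2πi(y+ℏ)} ≠ 1. Writing e(v) = e^{2πiv}, as q → 0⁺ (q real, 0 < q < 1) the following limits hold, all quotients being defined for sufficiently small q: (1) θ_q^{(s)}(−y)·θ_q(ℏ)/(θ_q(y+ℏ)·θ_q^{(s)}(0)) → (1 − e(−ℏ))/(1 − e(−y)e(−ℏ)), i.e. P(sτ, y) tends to that value; (2) θ_q^{(s)}(ℏ)·θ_q(y)/(θ_q(y+ℏ)·θ_q^{(s)}(0)) → (1 − e(−y))·e(−ℏ)/(1 − e(−y)e(−ℏ)), i.e. the limit of Q(sτ, y); (3) θ_q^{(−s)}(−y)·θ_q(ℏ)/(θ_q(y+ℏ)·θ_q^{(−s)}(0)) → (1 − e(−ℏ))·e(−y)/(1 − e(−y)e(−ℏ)), i.e. the limit of P(−sτ, y); (4) θ_q^{(−s)}(ℏ)·θ_q(y)/(θ_q(y+ℏ)·θ_q^{(−s)}(0)) → (1 − e(−y))/(1 − e(−y)e(−ℏ)), i.e. the limit of Q(−sτ, y). -/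

import Mathlib

/-!
Both theta functions are an elementary factor times two `q`-Pochhammer symbols `(a; q)_∞`, which are
jointly continuous in `(a, q)` and equal to `1` at `a = 0`. The arguments `q^{1 ± s} e(±v)` tend to
`0` because `|s| < 1`, so only the elementary factors survive in the limit: `e^{πiv} - e^{-πiv}` for
`θ_q(v)`, and, after multiplication by `q^{s/2}`, `-e^{-πiv}` for `θ_q^{(s)}(v)` with `0 < s < 1`.
The shift `-s` reduces to `s` since `θ` is odd.
-/

open Complex Filter

/-- The Jacobi theta function `θ_q(v) = (e^{πiv} − e^{−πiv})·∏_{n≥1} (1 − qⁿe^{2πiv})(1 − qⁿe^{−2πiv})`. -/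
noncomputable def jacobiThetaFn (q v : ℂ) : ℂ :=
  (Complex.exp (Real.pi * I * v) - Complex.exp (-(Real.pi * I * v))) *
    ∏' n : ℕ, ((1 - q ^ (n + 1) * Complex.exp (2 * Real.pi * I * v)) *
      (1 - q ^ (n + 1) * Complex.exp (-(2 * Real.pi * I * v))))

/-- The shifted theta value `θ_q^{(s)}(v)`, representing `θ(v + sτ)` for real `0 < q < 1`
(`q = e^{2πiτ}`, `q^s` the positive real power):
`(q^{s/2}e^{πiv} − q^{−s/2}e^{−πiv})·∏_{n≥1}(1 − q^{n+s}e^{2πiv})(1 − q^{n−s}e^{−2πiv})`. -/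
noncomputable def thetaShift (s : ℝ) (q : ℝ) (v : ℂ) : ℂ :=
  (((q ^ (s / 2) : ℝ) : ℂ) * Complex.exp (Real.pi * I * v) -
      ((q ^ (-s / 2) : ℝ) : ℂ) * Complex.exp (-(Real.pi * I * v))) *
    ∏' n : ℕ, ((1 - ((q ^ (((n : ℝ) + 1) + s) : ℝ) : ℂ) * Complex.exp (2 * Real.pi * I * v)) *
      (1 - ((q ^ (((n : ℝ) + 1) - s) : ℝ) : ℂ) * Complex.exp (-(2 * Real.pi * I * v))))

/-- `e(v) = e^{2πiv}`. -/
noncomputable def eFn (v : ℂ) : ℂ := Complex.exp (2 * Real.pi * I * v)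

open Topology

section QPochhammer

variable {R : Type*} [NormedCommRing R]

/-- The infinite `q`-Pochhammer symbol `(a; q)_∞ = ∏_{n ≥ 0} (1 - a qⁿ)`, in terms of which the
theta products are expressed. It is meaningful for `‖q‖ < 1`, where the product converges. -/
noncomputable def qPochhammer (a q : R) : R := ∏' n : ℕ, (1 - a * q ^ n)

@[simp]
lemma qPochhammer_zero_left (q : R) : qPochhammer 0 q = 1 := by simp [qPochhammer]

variable [NormOneClass R] [CompleteSpace R]

lemma multipliable_one_sub_mul_pow (a : R) {q : R} (hq : ‖q‖ < 1) :
    Multipliable fun n : ℕ ↦ 1 - a * q ^ n := by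
  simp only [sub_eq_add_neg]
  refine multipliable_one_add_of_summable ?_
  simpa only [norm_neg] using
    ((summable_norm_geometric_of_norm_lt_one hq).mul_left ‖a‖).of_nonneg_of_le
      (fun _ ↦ norm_nonneg _) (fun _ ↦ norm_mul_le _ _)

lemma tprod_one_sub_mul_pow_mul_one_sub_mul_pow (a b : R) {q : R} (hq : ‖q‖ < 1) :
    ∏' n : ℕ, ((1 - a * q ^ n) * (1 - b * q ^ n)) = qPochhammer a q * qPochhammer b q :=
  (multipliable_one_sub_mul_pow a hq).tprod_mul (multipliable_one_sub_mul_pow b hq)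

lemma continuousAt_qPochhammer (a : R) {q : R} (hq : ‖q‖ < 1) :
    ContinuousAt (fun p : R × R ↦ qPochhammer p.1 p.2) (a, q) := by
  obtain ⟨r, hqr, hr⟩ := exists_between hq
  have hr0 : 0 ≤ r := (norm_nonneg q).trans hqr.le
  have hfst : ∀ᶠ p : R × R in 𝓝 (a, q), ‖p.1‖ < ‖a‖ + 1 :=
    continuousAt_fst.norm.eventually_lt_const (lt_add_one ‖a‖)
  have hsnd : ∀ᶠ p : R × R in 𝓝 (a, q), ‖p.2‖ < r := continuousAt_snd.norm.eventually_lt_const hqr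
  simp only [ContinuousAt, qPochhammer, sub_eq_add_neg]
  refine tendsto_tprod_one_add_of_dominated_convergence
    ((summable_geometric_of_lt_one hr0 hr).mul_left (‖a‖ + 1)) (fun n ↦ ?_) ?_
  · exact Continuous.tendsto (f := fun p : R × R ↦ -(p.1 * p.2 ^ n)) (by fun_prop) (a, q)
  · filter_upwards [hfst, hsnd] with p hp₁ hp₂ n
    calc ‖-(p.1 * p.2 ^ n)‖ ≤ ‖p.1‖ * ‖p.2‖ ^ n := by
          rw [norm_neg]
          exact (norm_mul_le _ _).trans (by gcongr; exact norm_pow_le _ _)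
      _ ≤ (‖a‖ + 1) * r ^ n := by gcongr

lemma tendsto_qPochhammer_one {α : Type*} {l : Filter α} {a q : α → R}
    (ha : Tendsto a l (𝓝 0)) (hq : Tendsto q l (𝓝 0)) :
    Tendsto (fun x ↦ qPochhammer (a x) (q x)) l (𝓝 1) := by
  simpa [Function.comp_def] using
    (continuousAt_qPochhammer (0 : R) (q := 0) (by simp)).tendsto.comp (ha.prodMk_nhds hq)

end QPochhammer

lemma eFn_add (v w : ℂ) : eFn (v + w) = eFn v * eFn w := by
  rw [eFn, mul_add, Complex.exp_add, eFn, eFn]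

lemma eFn_neg (v : ℂ) : eFn (-v) = (eFn v)⁻¹ := by
  rw [eFn, mul_neg, Complex.exp_neg, eFn]

lemma exp_sub_exp_neg_eq_mul_one_sub_eFn (v : ℂ) :
    Complex.exp (Real.pi * I * v) - Complex.exp (-(Real.pi * I * v)) =
      Complex.exp (Real.pi * I * v) * (1 - eFn (-v)) := by
  rw [mul_sub, mul_one, eFn, ← Complex.exp_add]
  ring_nf

lemma jacobiThetaFn_eq_mul_qPochhammer {q : ℂ} (hq : ‖q‖ < 1) (v : ℂ) :
    jacobiThetaFn q v = Complex.exp (Real.pi * I * v) * (1 - eFn (-v)) *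
      (qPochhammer (q * eFn v) q * qPochhammer (q * eFn (-v)) q) := by
  rw [← exp_sub_exp_neg_eq_mul_one_sub_eFn, ← tprod_one_sub_mul_pow_mul_one_sub_mul_pow _ _ hq,
    jacobiThetaFn]
  simp only [eFn, pow_succ', mul_neg, mul_right_comm]

lemma thetaShift_eq_mul_qPochhammer (s : ℝ) {q : ℝ} (hq0 : 0 < q) (hq1 : q < 1) (v : ℂ) :
    thetaShift s q v =
      (((q ^ (s / 2) : ℝ) : ℂ) * Complex.exp (Real.pi * I * v) -
        ((q ^ (-s / 2) : ℝ) : ℂ) * Complex.exp (-(Real.pi * I * v))) *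
      (qPochhammer (((q ^ (1 + s) : ℝ) : ℂ) * eFn v) (q : ℂ) *
        qPochhammer (((q ^ (1 - s) : ℝ) : ℂ) * eFn (-v)) (q : ℂ)) := by
  have rpow_split (n : ℕ) (t : ℝ) : q ^ ((n : ℝ) + t) = q ^ t * q ^ n := by
    rw [Real.rpow_add hq0, Real.rpow_natCast, mul_comm]
  have hq : ‖(q : ℂ)‖ < 1 := by rwa [norm_real, Real.norm_of_nonneg hq0.le]
  rw [← tprod_one_sub_mul_pow_mul_one_sub_mul_pow _ _ hq, thetaShift]
  simp only [eFn, add_assoc, add_sub_assoc, rpow_split, ofReal_mul, ofReal_pow, mul_neg,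
    mul_right_comm]

lemma rpow_half_mul_thetaShift (s : ℝ) {q : ℝ} (hq0 : 0 < q) (hq1 : q < 1) (v : ℂ) :
    ((q ^ (s / 2) : ℝ) : ℂ) * thetaShift s q v =
      (((q ^ s : ℝ) : ℂ) * Complex.exp (Real.pi * I * v) - Complex.exp (-(Real.pi * I * v))) *
      (qPochhammer (((q ^ (1 + s) : ℝ) : ℂ) * eFn v) (q : ℂ) *
        qPochhammer (((q ^ (1 - s) : ℝ) : ℂ) * eFn (-v)) (q : ℂ)) := by
  have hsq : ((q ^ (s / 2) : ℝ) : ℂ) * ((q ^ (s / 2) : ℝ) : ℂ) = ((q ^ s : ℝ) : ℂ) := by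
    rw [← ofReal_mul, ← Real.rpow_add hq0, add_halves]
  have hinv : ((q ^ (s / 2) : ℝ) : ℂ) * ((q ^ (-s / 2) : ℝ) : ℂ) = 1 := by
    rw [← ofReal_mul, ← Real.rpow_add hq0, neg_div, add_neg_cancel, Real.rpow_zero, ofReal_one]
  rw [thetaShift_eq_mul_qPochhammer s hq0 hq1, ← mul_assoc]
  congr 1
  linear_combination Complex.exp (Real.pi * I * v) * hsq -
    Complex.exp (-(Real.pi * I * v)) * hinv

lemma thetaShift_neg_left (s q : ℝ) (v : ℂ) : thetaShift (-s) q v = -thetaShift s q (-v) := by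
  simp only [thetaShift, mul_neg, neg_neg, sub_neg_eq_add, ← sub_eq_add_neg, ← neg_mul, neg_sub]
  congr 1
  exact tprod_congr fun n ↦ mul_comm _ _

lemma tendsto_ofReal_nhdsGT_zero : Tendsto (fun q : ℝ ↦ (q : ℂ)) (𝓝[>] 0) (𝓝 0) :=
  (continuous_ofReal.tendsto' 0 0 ofReal_zero).mono_left nhdsWithin_le_nhds

lemma tendsto_ofReal_rpow_nhdsGT_zero {r : ℝ} (hr : 0 < r) :
    Tendsto (fun q : ℝ ↦ ((q ^ r : ℝ) : ℂ)) (𝓝[>] 0) (𝓝 0) :=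
  ((continuous_ofReal.comp (Real.continuous_rpow_const hr.le)).tendsto' 0 0
    (by simp [Real.zero_rpow hr.ne'])).mono_left nhdsWithin_le_nhds

lemma tendsto_jacobiThetaFn_zero (v : ℂ) :
    Tendsto (fun q ↦ jacobiThetaFn q v) (𝓝 0)
      (𝓝 (Complex.exp (Real.pi * I * v) * (1 - eFn (-v)))) := by
  have arg_tendsto (c : ℂ) : Tendsto (fun q : ℂ ↦ q * c) (𝓝 0) (𝓝 0) :=
    (continuous_mul_const c).tendsto' 0 0 (zero_mul c)
  have hprod := ((tendsto_qPochhammer_one (arg_tendsto (eFn v)) tendsto_id).mul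
    (tendsto_qPochhammer_one (arg_tendsto (eFn (-v))) tendsto_id)).const_mul
      (Complex.exp (Real.pi * I * v) * (1 - eFn (-v)))
  rw [mul_one, mul_one] at hprod
  refine hprod.congr' ?_
  filter_upwards [Metric.ball_mem_nhds (0 : ℂ) one_pos] with q hq
  exact (jacobiThetaFn_eq_mul_qPochhammer (mem_ball_zero_iff.mp hq) v).symm

section ThetaShift

variable {s : ℝ}

lemma tendsto_rpow_half_mul_thetaShift (hs0 : 0 < s) (hs1 : s < 1) (v : ℂ) :
    Tendsto (fun q : ℝ ↦ ((q ^ (s / 2) : ℝ) : ℂ) * thetaShift s q v) (𝓝[>] 0)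
      (𝓝 (-Complex.exp (-(Real.pi * I * v)))) := by
  have arg_tendsto {r : ℝ} (hr : 0 < r) (c : ℂ) :
      Tendsto (fun q : ℝ ↦ ((q ^ r : ℝ) : ℂ) * c) (𝓝[>] 0) (𝓝 0) := by
    simpa using (tendsto_ofReal_rpow_nhdsGT_zero hr).mul_const c
  have hfactor := (arg_tendsto hs0 (Complex.exp (Real.pi * I * v))).sub_const
    (Complex.exp (-(Real.pi * I * v)))
  have hprod := (tendsto_qPochhammer_one (arg_tendsto (by linarith : 0 < 1 + s) (eFn v))
    tendsto_ofReal_nhdsGT_zero).mul (tendsto_qPochhammer_one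
      (arg_tendsto (sub_pos.mpr hs1) (eFn (-v))) tendsto_ofReal_nhdsGT_zero)
  have hlim := hfactor.mul hprod
  rw [zero_sub, mul_one, mul_one] at hlim
  refine hlim.congr' ?_
  filter_upwards [Ioo_mem_nhdsGT one_pos] with q ⟨hq0, hq1⟩
  exact (rpow_half_mul_thetaShift s hq0 hq1 v).symm

lemma eventually_thetaShift_zero_ne_zero (hs0 : 0 < s) (hs1 : s < 1) :
    ∀ᶠ q : ℝ in 𝓝[>] 0, thetaShift s q 0 ≠ 0 := by
  filter_upwards [(tendsto_rpow_half_mul_thetaShift hs0 hs1 0).eventually_ne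
    (neg_ne_zero.mpr (Complex.exp_ne_zero _))] with q hq
  exact right_ne_zero_of_mul hq

lemma tendsto_thetaShift_div_thetaShift_zero (hs0 : 0 < s) (hs1 : s < 1) (v : ℂ) :
    Tendsto (fun q : ℝ ↦ thetaShift s q v / thetaShift s q 0) (𝓝[>] 0)
      (𝓝 (Complex.exp (-(Real.pi * I * v)))) := by
  have hlim := (tendsto_rpow_half_mul_thetaShift hs0 hs1 v).div
    (tendsto_rpow_half_mul_thetaShift hs0 hs1 0) (neg_ne_zero.mpr (Complex.exp_ne_zero _))
  rw [mul_zero, neg_zero, Complex.exp_zero, neg_div_neg_eq, div_one] at hlim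
  refine hlim.congr' ?_
  filter_upwards [self_mem_nhdsWithin] with q hq
  exact mul_div_mul_left _ _ (ofReal_ne_zero.mpr (Real.rpow_pos_of_pos hq _).ne')

lemma tendsto_thetaShift_neg_div_thetaShift_neg_zero (hs0 : 0 < s) (hs1 : s < 1) (v : ℂ) :
    Tendsto (fun q : ℝ ↦ thetaShift (-s) q v / thetaShift (-s) q 0) (𝓝[>] 0)
      (𝓝 (Complex.exp (Real.pi * I * v))) := by
  simpa [thetaShift_neg_left, neg_div_neg_eq] using
    tendsto_thetaShift_div_thetaShift_zero hs0 hs1 (-v)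

end ThetaShift

section Quotient

variable {w : ℂ}

lemma exp_mul_one_sub_eFn_neg_ne_zero (hw : eFn w ≠ 1) :
    Complex.exp (Real.pi * I * w) * (1 - eFn (-w)) ≠ 0 := by
  refine mul_ne_zero (Complex.exp_ne_zero _) (sub_ne_zero.mpr (Ne.symm ?_))
  rwa [eFn_neg, inv_ne_one]

lemma eventually_jacobiThetaFn_ne_zero (hw : eFn w ≠ 1) :
    ∀ᶠ q : ℂ in 𝓝 0, jacobiThetaFn q w ≠ 0 :=
  (tendsto_jacobiThetaFn_zero w).eventually_ne (exp_mul_one_sub_eFn_neg_ne_zero hw)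

lemma tendsto_thetaShift_mul_jacobiThetaFn_div {t : ℝ} {u v r d : ℂ} (hw : eFn w ≠ 1)
    (hr : Tendsto (fun q : ℝ ↦ thetaShift t q u / thetaShift t q 0) (𝓝[>] 0) (𝓝 r))
    (hd : r * Complex.exp (Real.pi * I * v) = d * Complex.exp (Real.pi * I * w)) :
    Tendsto (fun q : ℝ ↦ thetaShift t q u * jacobiThetaFn (q : ℂ) v /
        (jacobiThetaFn (q : ℂ) w * thetaShift t q 0)) (𝓝[>] 0)
      (𝓝 ((1 - eFn (-v)) * d / (1 - eFn (-w)))) := by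
  have hlim := hr.mul (((tendsto_jacobiThetaFn_zero v).div (tendsto_jacobiThetaFn_zero w)
    (exp_mul_one_sub_eFn_neg_ne_zero hw)).comp tendsto_ofReal_nhdsGT_zero)
  have hvalue : r * (Complex.exp (Real.pi * I * v) * (1 - eFn (-v)) /
      (Complex.exp (Real.pi * I * w) * (1 - eFn (-w)))) =
      (1 - eFn (-v)) * d / (1 - eFn (-w)) := by
    rw [← mul_div_assoc, ← mul_assoc, hd, mul_right_comm, mul_comm,
      mul_div_mul_left _ _ (Complex.exp_ne_zero _), mul_comm d]
  rw [hvalue] at hlim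
  refine hlim.congr fun q ↦ ?_
  rw [Function.comp_apply, Pi.div_apply, div_mul_div_comm, mul_comm (thetaShift t q 0)]

end Quotient

/-- limits of `P(±sτ, y)` and `Q(±sτ, y)` as `q → 0⁺`, for `0 < s < 1` and
`e^{2πi(y+ℏ)} ≠ 1`, together with the eventual nonvanishing of the denominators. -/
theorem stmt18 (s : ℝ) (hs0 : 0 < s) (hs1 : s < 1) (y h : ℂ)
    (hyh : Complex.exp (2 * Real.pi * I * (y + h)) ≠ 1) :
    (∀ᶠ q : ℝ in nhdsWithin (0 : ℝ) (Set.Ioi 0),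
      jacobiThetaFn (q : ℂ) (y + h) ≠ 0 ∧ thetaShift s q 0 ≠ 0 ∧ thetaShift (-s) q 0 ≠ 0) ∧
    Tendsto (fun q : ℝ =>
        thetaShift s q (-y) * jacobiThetaFn (q : ℂ) h /
          (jacobiThetaFn (q : ℂ) (y + h) * thetaShift s q 0))
      (nhdsWithin (0 : ℝ) (Set.Ioi 0))
      (nhds ((1 - eFn (-h)) / (1 - eFn (-y) * eFn (-h)))) ∧
    Tendsto (fun q : ℝ =>
        thetaShift s q h * jacobiThetaFn (q : ℂ) y /
          (jacobiThetaFn (q : ℂ) (y + h) * thetaShift s q 0))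
      (nhdsWithin (0 : ℝ) (Set.Ioi 0))
      (nhds ((1 - eFn (-y)) * eFn (-h) / (1 - eFn (-y) * eFn (-h)))) ∧
    Tendsto (fun q : ℝ =>
        thetaShift (-s) q (-y) * jacobiThetaFn (q : ℂ) h /
          (jacobiThetaFn (q : ℂ) (y + h) * thetaShift (-s) q 0))
      (nhdsWithin (0 : ℝ) (Set.Ioi 0))
      (nhds ((1 - eFn (-h)) * eFn (-y) / (1 - eFn (-y) * eFn (-h)))) ∧
    Tendsto (fun q : ℝ =>
        thetaShift (-s) q h * jacobiThetaFn (q : ℂ) y /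
          (jacobiThetaFn (q : ℂ) (y + h) * thetaShift (-s) q 0))
      (nhdsWithin (0 : ℝ) (Set.Ioi 0))
      (nhds ((1 - eFn (-y)) / (1 - eFn (-y) * eFn (-h)))) := by
  have hw : eFn (y + h) ≠ 1 := hyh
  rw [← eFn_add, ← neg_add]
  refine ⟨?_, ?_, ?_, ?_, ?_⟩
  · filter_upwards [tendsto_ofReal_nhdsGT_zero.eventually (eventually_jacobiThetaFn_ne_zero hw),
      eventually_thetaShift_zero_ne_zero hs0 hs1] with q hJ hT
    exact ⟨hJ, hT, by simpa [thetaShift_neg_left] using hT⟩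
  · rw [← mul_one (1 - eFn (-h))]
    refine tendsto_thetaShift_mul_jacobiThetaFn_div hw
      (tendsto_thetaShift_div_thetaShift_zero hs0 hs1 (-y)) ?_
    rw [one_mul, ← Complex.exp_add]
    ring_nf
  · refine tendsto_thetaShift_mul_jacobiThetaFn_div hw
      (tendsto_thetaShift_div_thetaShift_zero hs0 hs1 h) ?_
    rw [eFn, ← Complex.exp_add, ← Complex.exp_add]
    ring_nf
  · refine tendsto_thetaShift_mul_jacobiThetaFn_div hw
      (tendsto_thetaShift_neg_div_thetaShift_neg_zero hs0 hs1 (-y)) ?_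
    rw [eFn, ← Complex.exp_add, ← Complex.exp_add]
    ring_nf
  · rw [← mul_one (1 - eFn (-y))]
    refine tendsto_thetaShift_mul_jacobiThetaFn_div hw
      (tendsto_thetaShift_neg_div_thetaShift_neg_zero hs0 hs1 h) ?_
    rw [one_mul, ← Complex.exp_add]
    ring_nf
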